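/- Let $V_1, V_2, V_3$ be modules over a commutative ring (vector spaces), and $D_1 : V_1 \to V_2$, $D_2 : V_2 \to V_3$ linear maps with $\mathrm{Range}(D_1) = \mathrm{Ker}(D_2)$ (exactness at $V_2$). Let $W_1 \le V_1$ and $W_2 \le V_2$ be submodules with $D_1(W_1) \subseteq W_2$, and let $\Pi_1 : V_1 \to V_1$, $\Pi_2 : V_2 \to V_2$ be linear maps such that $\mathrm{Range}(\Pi_1) \subseteq W_1$, $\Pi_2 w = w$ for all $w \in W_2$, and the commutativity property $\Pi_2 \circ D_1 = D_1 \circ \Pi_1$ holds. Then the subcomplex is exact at $W_2$, i.e., $D_1(W_1) = \{ w \in W_2 : D_2 w = 0 \}$. -/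

import Mathlib

section Semiconj

open Function Set

variable {α β : Type*} {f : α → β} {ga : α → α} {gb : β → β} {s : Set α} {t : Set β}

theorem inter_range_subset_image_of_semiconj (hcomm : Semiconj f ga gb) (hrange : range ga ⊆ s)
    (hfix : EqOn gb id t) : t ∩ range f ⊆ f '' s := by
  rintro _ ⟨hfx, x, rfl⟩
  have hproj : f (ga x) = f x :=
    calc
      f (ga x) = gb (f x) := hcomm x
      _ = f x := hfix hfx
  exact ⟨ga x, hrange (mem_range_self x), hproj⟩

theorem image_eq_inter_range_of_semiconj (hmap : MapsTo f s t) (hcomm : Semiconj f ga gb)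
    (hrange : range ga ⊆ s) (hfix : EqOn gb id t) : f '' s = t ∩ range f :=
  (subset_inter hmap.image_subset (image_subset_range f s)).antisymm
    (inter_range_subset_image_of_semiconj hcomm hrange hfix)

end Semiconj

theorem subcomplex_exactness_general {R V₁ V₂ V₃ : Type*} [Semiring R]
    [AddCommMonoid V₁] [Module R V₁] [AddCommMonoid V₂] [Module R V₂]
    [AddCommMonoid V₃] [Module R V₃] {D1 : V₁ →ₗ[R] V₂} {D2 : V₂ →ₗ[R] V₃}
    (hexact : LinearMap.range D1 = LinearMap.ker D2)
    {W₁ : Submodule R V₁} {W₂ : Submodule R V₂} (hmap : Submodule.map D1 W₁ ≤ W₂)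
    {Pi1 : V₁ → V₁} {Pi2 : V₂ → V₂} (hrange : Set.range Pi1 ⊆ W₁)
    (hfix : Set.EqOn Pi2 id W₂) (hcomm : Function.Semiconj D1 Pi1 Pi2) :
    Submodule.map D1 W₁ = W₂ ⊓ LinearMap.ker D2 := by
  rw [← hexact]
  apply SetLike.coe_injective
  rw [Submodule.map_coe, Submodule.coe_inf, LinearMap.coe_range]
  exact image_eq_inter_range_of_semiconj (Submodule.map_le_iff_le_comap.mp hmap) hcomm hrange hfix

/-- Exactness of the continuous sequence transfers to a subcomplex via commuting
projections: if `Range D₁ = Ker D₂`, `D₁ W₁ ⊆ W₂`, `Range Π₁ ⊆ W₁`, `Π₂` fixes `W₂`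
pointwise, and `Π₂ ∘ D₁ = D₁ ∘ Π₁`, then `D₁(W₁) = {w ∈ W₂ : D₂ w = 0}`. -/
theorem subcomplex_exactness
    {R : Type*} [CommRing R]
    {V₁ V₂ V₃ : Type*}
    [AddCommGroup V₁] [Module R V₁] [AddCommGroup V₂] [Module R V₂]
    [AddCommGroup V₃] [Module R V₃]
    (D1 : V₁ →ₗ[R] V₂) (D2 : V₂ →ₗ[R] V₃)
    (hexact : LinearMap.range D1 = LinearMap.ker D2)
    (W₁ : Submodule R V₁) (W₂ : Submodule R V₂)
    (hmap : Submodule.map D1 W₁ ≤ W₂)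
    (Pi1 : V₁ →ₗ[R] V₁) (Pi2 : V₂ →ₗ[R] V₂)
    (hrange : LinearMap.range Pi1 ≤ W₁)
    (hfix : ∀ w ∈ W₂, Pi2 w = w)
    (hcomm : Pi2 ∘ₗ D1 = D1 ∘ₗ Pi1) :
    Submodule.map D1 W₁ = W₂ ⊓ LinearMap.ker D2 :=
  subcomplex_exactness_general hexact hmap hrange hfix
    fun v => (LinearMap.congr_fun hcomm v).symm
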